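/- Let P ⊆ ℤ^n_{≥0} be a polymatroid over [n]. Then the sequence of coefficients [x^0]I_P(x), [x^1]I_P(x), …, [x^{r'_2(P)−1}]I_P(x) of the interior polynomial is unimodal: there exists an index k such that [x^i]I_P(x) ≤ [x^{i+1}]I_P(x) for all i < k with i+1 ≤ r'_2(P)−1, and [x^i]I_P(x) ≥ [x^{i+1}]I_P(x) for all i > k with i+1 ≤ r'_2(P)−1. -/

import Mathlib

open Finset Polynomial

/-- `f` is the rank function of a polymatroid over the ground set `[n]` (encoded as `Fin n`):
normalization, monotonicity and submodularity. -/
def IsPolymatroidRank (n : ℕ) (f : Finset (Fin n) → ℕ) : Prop :=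
  f ∅ = 0 ∧ (∀ I J : Finset (Fin n), I ⊆ J → f I ≤ f J) ∧
    ∀ I J : Finset (Fin n), f (I ∪ J) + f (I ∩ J) ≤ f I + f J

/-- The set of bases of the polymatroid `P ⊆ ℤ^n_{≥0}` with rank function `f`:
all nonnegative integer vectors `a` with `∑_{i ∈ I} a i ≤ f I` for every `I ⊆ [n]`
and `∑_{i ∈ [n]} a i = f [n]`.  (Every such vector has entries `≤ f [n]`, whence the
bounding box used to produce a `Finset`.) -/
def polyBases (n : ℕ) (f : Finset (Fin n) → ℕ) : Finset (Fin n → ℤ) :=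
  ((Finset.univ : Finset (Fin n → Fin (f Finset.univ + 1))).image
      (fun a i => ((a i : ℕ) : ℤ))).filter
    fun a => (∀ i, 0 ≤ a i) ∧ (∀ I : Finset (Fin n), ∑ i ∈ I, a i ≤ (f I : ℤ)) ∧
      ∑ i, a i = (f Finset.univ : ℤ)

/-- The externally active indices of a basis `a`: those `i` such that
`a + e_i - e_j ∉ P` for every `j < i`. -/
def extAct (n : ℕ) (f : Finset (Fin n) → ℕ) (a : Fin n → ℤ) : Finset (Fin n) :=
  Finset.univ.filter fun i => ∀ j, j < i →
    (fun t => a t + (if t = i then 1 else 0) - (if t = j then 1 else 0)) ∉ polyBases n f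

/-- The internally active indices of a basis `a`: those `i` such that
`a - e_i + e_j ∉ P` for every `j < i`. -/
def intAct (n : ℕ) (f : Finset (Fin n) → ℕ) (a : Fin n → ℤ) : Finset (Fin n) :=
  Finset.univ.filter fun i => ∀ j, j < i →
    (fun t => a t - (if t = i then 1 else 0) + (if t = j then 1 else 0)) ∉ polyBases n f

/-- The exterior polynomial `X_P(y) = ∑_{a ∈ P} y^(n - |Ext(a)|)`. -/
noncomputable def exteriorPoly (n : ℕ) (f : Finset (Fin n) → ℕ) : Polynomial ℤ :=
  ∑ a ∈ polyBases n f, X ^ (n - (extAct n f a).card)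

/-- The interior polynomial `I_P(x) = ∑_{a ∈ P} x^(n - |Int(a)|)`. -/
noncomputable def interiorPoly (n : ℕ) (f : Finset (Fin n) → ℕ) : Polynomial ℤ :=
  ∑ a ∈ polyBases n f, X ^ (n - (intAct n f a).card)

/-- `r_k(P) = min { n - |F| : F ⊆ [n], f F ≤ f [n] - k }` (junk value `0` if no such `F`). -/
noncomputable def rk (n : ℕ) (f : Finset (Fin n) → ℕ) (k : ℕ) : ℕ :=
  sInf {m | ∃ F : Finset (Fin n), (f F : ℤ) ≤ (f Finset.univ : ℤ) - k ∧ m = n - F.card}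

/-- `r'_k(P) = min { |F| : F ⊆ [n], ∑_{i ∈ F} f {i} - f F ≥ k }` (junk value `0` if no such `F`). -/
noncomputable def rk' (n : ℕ) (f : Finset (Fin n) → ℕ) (k : ℕ) : ℕ :=
  sInf {m | ∃ F : Finset (Fin n), (k : ℤ) ≤ (∑ i ∈ F, (f {i} : ℤ)) - (f F : ℤ) ∧ m = F.card}

/-- `H_j(P)`: the flats `H` (i.e. `f (H ∪ {e}) > f H` for all `e ∉ H`) with
`f H = f [n] - 1` and `n - |H| = j`. -/
def Hset (n : ℕ) (f : Finset (Fin n) → ℕ) (j : ℕ) : Finset (Finset (Fin n)) :=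
  Finset.univ.filter fun H =>
    (∀ e, e ∉ H → f H < f (insert e H)) ∧ (f H : ℤ) = (f Finset.univ : ℤ) - 1 ∧
      n - H.card = j

/-- `C_j(P)`: the sets `C` with `|C| = j`, `∑_{i ∈ C} f {i} - f C = 1` and
`∑_{i ∈ C \ {j'}} f {i} = f (C \ {j'})` for every `j' ∈ C`. -/
def Cset (n : ℕ) (f : Finset (Fin n) → ℕ) (j : ℕ) : Finset (Finset (Fin n)) :=
  Finset.univ.filter fun C => C.card = j ∧
    (∑ i ∈ C, (f {i} : ℤ)) - (f C : ℤ) = 1 ∧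
    ∀ j' ∈ C, (∑ i ∈ C.erase j', (f {i} : ℤ)) = (f (C.erase j') : ℤ)

/-- The dual rank function `f*(I) = f([n] \ I) - f([n]) + ∑_{i ∈ I} f {i}`
(the subtraction is exact for a polymatroid rank function). -/
def fdual (n : ℕ) (f : Finset (Fin n) → ℕ) : Finset (Fin n) → ℕ :=
  fun I => f (Finset.univ \ I) + (∑ i ∈ I, f {i}) - f Finset.univ

/-!
Let `d` be the excess of `[n]`, that is `∑ i, f {i} - f [n]`, and draw independent geometric
variables `v i ≥ 0` with success probability `y`. The probability that the vector with entries
`f {i} - v i` satisfies all the rank inequalities can be computed in two ways.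

Every integer vector satisfying them lies below exactly one basis from which it differs only at
internally active indices. The vectors assigned in this way to the basis `a` form a box of
probability `(1 - y) ^ d * y ^ (n - |Int(a)|)`, so the answer is `(1 - y) ^ d * I_P(y)`.

On the other hand, truncate the variables at a level above `d`. The coordinates that stay below the
level contribute a factor `y` each, so modulo `y ^ r` with `r = r'_2(P)` only the outcomes with
fewer than `r` of them count, and for these the set of such coordinates has excess at most `1`. Then
the vector is feasible unless `v` vanishes on some minimal set of positive excess, a circuit, and
there is at most one such circuit. This gives `1 - ∑ y ^ |C|`, summed over the circuits `C`.

So modulo `y ^ r` the coefficients of `(1 - y) ^ d * I_P(y)` are nonnegative in degree `0` and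
nonpositive afterwards. Division by `1 - y` takes partial sums, which preserves such a sign pattern;
after `d - 1` divisions it is the pattern of the differences of the coefficients of `I_P`.
-/

section SignPattern

/-- A sequence with terms `a 0, …, a (r - 1)` in which no positive term comes after a negative one:
this is the sign pattern of the differences of a unimodal sequence. -/
def NonnegThenNonpos {R : Type*} [Zero R] [Preorder R] (r : ℕ) (a : ℕ → R) : Prop :=
  ∀ i j, i ≤ j → j < r → a i < 0 → a j ≤ 0

variable {R : Type*} [CommRing R] {p q : R[X]} {r : ℕ}

lemma coeff_succ_one_sub_X_mul (p : R[X]) (i : ℕ) :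
    ((1 - X) * p).coeff (i + 1) = p.coeff (i + 1) - p.coeff i := by
  simp [sub_mul, coeff_X_mul]

lemma coeff_zero_one_sub_X_pow_mul (p : R[X]) (d : ℕ) :
    ((1 - X) ^ d * p).coeff 0 = p.coeff 0 := by
  simp [coeff_zero_eq_eval_zero]

variable [LinearOrder R] [IsOrderedRing R]

lemma NonnegThenNonpos.of_one_sub_X_mul (hp : 0 ≤ p.coeff 0)
    (h : NonnegThenNonpos r ((1 - X) * p).coeff) : NonnegThenNonpos r p.coeff := by
  intro i j hij hj hi
  obtain ⟨m, hmi, hm⟩ : ∃ m < i, ((1 - X) * p).coeff (m + 1) < 0 := by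
    by_contra! hinc
    have hle : ∀ k ≤ i, 0 ≤ p.coeff k := by
      intro k
      induction k with
      | zero => exact fun _ ↦ hp
      | succ k ih =>
        intro hk
        have := hinc k hk
        rw [coeff_succ_one_sub_X_mul, sub_nonneg] at this
        exact (ih (by lia)).trans this
    exact (hle i le_rfl).not_gt hi
  induction j, hij using Nat.le_induction with
  | base => exact hi.le
  | succ j hij ih =>
    have := h (m + 1) (j + 1) (by lia) hj hm
    rw [coeff_succ_one_sub_X_mul, sub_nonpos] at this
    exact this.trans (ih (by lia))

lemma NonnegThenNonpos.of_one_sub_X_pow_mul (hp : 0 ≤ p.coeff 0) (d : ℕ)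
    (h : NonnegThenNonpos r ((1 - X) ^ d * p).coeff) : NonnegThenNonpos r p.coeff := by
  induction d with
  | zero => simpa using h
  | succ d ih =>
    refine ih (.of_one_sub_X_mul ?_ (by rwa [← mul_assoc, ← pow_succ']))
    rwa [coeff_zero_one_sub_X_pow_mul]

lemma NonnegThenNonpos.exists_unimodal (h : NonnegThenNonpos r ((1 - X) * p).coeff) :
    ∃ k, (∀ i < k, i + 1 < r → p.coeff i ≤ p.coeff (i + 1)) ∧
      ∀ i, k < i → i + 1 < r → p.coeff (i + 1) ≤ p.coeff i := by
  classical
  by_cases hneg : ∃ i, ((1 - X) * p).coeff (i + 1) < 0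
  · refine ⟨Nat.find hneg, fun i hi _ ↦ ?_, fun i hi hir ↦ ?_⟩
    · simpa [coeff_succ_one_sub_X_mul] using Nat.find_min hneg hi
    · simpa [coeff_succ_one_sub_X_mul] using
        h _ (i + 1) (by lia) hir (Nat.find_spec hneg)
  · refine ⟨r, fun i _ _ ↦ ?_, fun i _ _ ↦ by lia⟩
    simpa [coeff_succ_one_sub_X_mul] using not_exists.1 hneg i

lemma exists_unimodal_of_X_pow_dvd (hr : 0 < r) (d : ℕ)
    (h : X ^ r ∣ (1 - X) ^ (d + 1) * p - q) (hq₀ : 0 ≤ q.coeff 0)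
    (hq : ∀ i, 0 < i → q.coeff i ≤ 0) :
    ∃ k, (∀ i < k, i + 1 < r → p.coeff i ≤ p.coeff (i + 1)) ∧
      ∀ i, k < i → i + 1 < r → p.coeff (i + 1) ≤ p.coeff i := by
  have hcoeff : ∀ i < r, ((1 - X) ^ (d + 1) * p).coeff i = q.coeff i := fun i hi ↦
    sub_eq_zero.1 (by rw [← coeff_sub]; exact X_pow_dvd_iff.1 h i hi)
  have hp : 0 ≤ ((1 - X) * p).coeff 0 := by
    have := hcoeff 0 hr
    rw [coeff_zero_one_sub_X_pow_mul] at this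
    rwa [← pow_one (1 - X), coeff_zero_one_sub_X_pow_mul, this]
  refine (NonnegThenNonpos.of_one_sub_X_pow_mul hp d ?_).exists_unimodal
  rw [← mul_assoc, ← pow_succ]
  intro i j hij hj hi
  rw [hcoeff i (by lia)] at hi
  rw [hcoeff j hj]
  rcases j.eq_zero_or_pos with rfl | hj₀
  · exact absurd hi (by simpa [Nat.le_zero.1 hij] using hq₀)
  · exact hq j hj₀

end SignPattern

section TruncatedGeometric

variable {ι R : Type*} [Fintype ι] [CommRing R] {D : ℕ}

/-- The distribution of a geometric random variable with success probability `y`, truncated at `D`;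
it makes sense for an element `y` of any ring, in particular for a polynomial variable. -/
def truncGeom (y : R) (D t : ℕ) : R := if t < D then y * (1 - y) ^ t else (1 - y) ^ D

lemma sum_Icc_truncGeom (y : R) {b : ℕ} (hb : b ≤ D) :
    ∑ t ∈ Icc b D, truncGeom y D t = (1 - y) ^ b := by
  have hbelow : ∑ t ∈ Ico b D, truncGeom y D t = y * ∑ t ∈ Ico b D, (1 - y) ^ t := by
    rw [mul_sum]
    exact sum_congr rfl fun t ht ↦ if_pos (mem_Ico.1 ht).2
  rw [← Finset.Ico_insert_right hb, sum_insert right_notMem_Ico, hbelow, truncGeom,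
    if_neg (lt_irrefl D)]
  linear_combination -geom_sum_Ico_mul (1 - y) hb

lemma pow_card_dvd_prod_truncGeom (y : R) (v : ι → ℕ) :
    y ^ #{i | v i < D} ∣ ∏ i, truncGeom y D (v i) := by
  rw [← prod_const]
  refine (prod_dvd_prod_of_dvd _ _ fun i hi ↦ ?_).trans
    (prod_dvd_prod_of_subset _ _ _ (filter_subset _ _))
  simp [truncGeom, (mem_filter.1 hi).2]

variable [DecidableEq ι]

/-- The vectors obtained from `b` by raising the coordinates in `A` up to at most `D`. -/
def raisedBox (b : ι → ℕ) (A : Finset ι) (D : ℕ) : Finset (ι → ℕ) :=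
  Fintype.piFinset fun i ↦ if i ∈ A then Icc (b i) D else {b i}

lemma mem_raisedBox_iff {b v : ι → ℕ} {A : Finset ι} (hb : ∀ i, b i ≤ D) :
    v ∈ raisedBox b A D ↔ (∀ i, v i ≤ D) ∧ b ≤ v ∧ ∀ i, b i < v i → i ∈ A := by
  simp only [raisedBox, Fintype.mem_piFinset, Pi.le_def, ← forall_and]
  refine forall_congr' fun i ↦ ?_
  have := hb i
  by_cases hi : i ∈ A <;> simp [hi] <;> lia

lemma sum_raisedBox_prod_truncGeom (y : R) {b : ι → ℕ} (A : Finset ι) (hb : ∀ i, b i < D) :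
    ∑ v ∈ raisedBox b A D, ∏ i, truncGeom y D (v i) = (1 - y) ^ (∑ i, b i) * y ^ #Aᶜ := by
  have hfactor (i : ι) : ∑ t ∈ (if i ∈ A then Icc (b i) D else {b i}), truncGeom y D t =
      (1 - y) ^ b i * if i ∈ Aᶜ then y else 1 := by
    by_cases hi : i ∈ A
    · simp [hi, sum_Icc_truncGeom y (hb i).le]
    · simp [hi, truncGeom, hb i, mul_comm]
  rw [raisedBox, ← prod_univ_sum, prod_congr rfl fun i _ ↦ hfactor i, prod_mul_distrib,
    prod_pow_eq_pow_sum, prod_ite_mem, univ_inter, prod_const]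

lemma sum_raisedBox_filter_eq_zero_on (y : R) (hD : 0 < D) (C : Finset ι) :
    ∑ v ∈ raisedBox 0 univ D with ∀ i ∈ C, v i = 0, ∏ i, truncGeom y D (v i) = y ^ #C := by
  have hfilter : {v ∈ raisedBox (0 : ι → ℕ) univ D | ∀ i ∈ C, v i = 0} = raisedBox 0 Cᶜ D := by
    ext v
    have hb (i : ι) : (0 : ι → ℕ) i ≤ D := D.zero_le
    rw [mem_filter, mem_raisedBox_iff hb, mem_raisedBox_iff hb]
    simp only [Pi.le_def, Pi.zero_apply, mem_univ, mem_compl]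
    grind
  rw [hfilter, sum_raisedBox_prod_truncGeom (b := 0) y Cᶜ fun _ ↦ hD]
  simp

end TruncatedGeometric

section Submodular

variable {ι : Type*} [LinearOrder ι]

/-- A normalized integer-valued submodular set function; polymatroid rank functions are those that
are also monotone. -/
structure IsNormalizedSubmodular (f : Finset ι → ℤ) : Prop where
  map_empty : f ∅ = 0
  union_add_inter_le : ∀ I J, f (I ∪ J) + f (I ∩ J) ≤ f I + f J

/-- The integer points of the submodular polyhedron of `f`. Entries may be negative, so for a
polymatroid these are all vectors lying below some basis. -/
def IsIndepVector (f : Finset ι → ℤ) (u : ι → ℤ) : Prop := ∀ I, ∑ i ∈ I, u i ≤ f I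

/-- The set `T` is tight for `u`: its constraint in the submodular polyhedron of `f` is attained. -/
def IsTight (f : Finset ι → ℤ) (u : ι → ℤ) (T : Finset ι) : Prop := ∑ i ∈ T, u i = f T

/-- The integer points of the base polyhedron of `f`. -/
def IsBaseVector [Fintype ι] (f : Finset ι → ℤ) (a : ι → ℤ) : Prop :=
  IsIndepVector f a ∧ IsTight f a univ

/-- Internal activity of the index `i` at `a`. For a base `a` the vector `a - e_i + e_j` is again a
base as soon as it is independent, so this is the usual notion. -/
def IsInternallyActive (f : Finset ι → ℤ) (a : ι → ℤ) (i : ι) : Prop :=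
  ∀ j < i, ¬ IsIndepVector f (a - Pi.single i 1 + Pi.single j 1)

variable {f : Finset ι → ℤ} {u a b : ι → ℤ} {i j : ι}

lemma sum_exchange (a : ι → ℤ) (i j : ι) (I : Finset ι) :
    ∑ t ∈ I, (a - Pi.single i 1 + Pi.single j 1 : ι → ℤ) t =
      ∑ t ∈ I, a t - (if i ∈ I then 1 else 0) + if j ∈ I then 1 else 0 := by
  simp [sum_add_distrib, sum_sub_distrib, sum_pi_single']

lemma IsIndepVector.exists_isTight_of_not_add_single (hu : IsIndepVector f u)
    (h : ¬ IsIndepVector f (u + Pi.single j 1)) : ∃ T, IsTight f u T ∧ j ∈ T := by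
  obtain ⟨T, hT⟩ := not_forall.1 h
  have := hu T
  simp only [Pi.add_apply, sum_add_distrib, sum_pi_single'] at hT
  unfold IsTight
  exact ⟨T, by grind⟩

lemma IsIndepVector.exists_isTight_of_not_exchange (hu : IsIndepVector f u)
    (h : ¬ IsIndepVector f (u - Pi.single i 1 + Pi.single j 1)) :
    ∃ T, IsTight f u T ∧ j ∈ T ∧ i ∉ T := by
  obtain ⟨T, hT⟩ := not_forall.1 h
  have := hu T
  rw [sum_exchange] at hT
  unfold IsTight
  exact ⟨T, by grind⟩

lemma IsTight.union (hf : IsNormalizedSubmodular f) (hu : IsIndepVector f u) {S T : Finset ι}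
    (hS : IsTight f u S) (hT : IsTight f u T) : IsTight f u (S ∪ T) := by
  have hsum := sum_union_inter (s₁ := S) (s₂ := T) (f := u)
  have := hf.union_add_inter_le S T
  have := hu (S ∪ T)
  have := hu (S ∩ T)
  unfold IsTight at *
  lia

lemma IsTight.sup (hf : IsNormalizedSubmodular f) (hu : IsIndepVector f u) {κ : Type*}
    {s : Finset κ} {T : κ → Finset ι} (hT : ∀ k ∈ s, IsTight f u (T k)) :
    IsTight f u (s.sup T) :=
  sup_induction (p := IsTight f u) (by simp [IsTight, hf.map_empty])
    (fun _ hS _ hT ↦ hS.union hf hu hT) hT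

lemma toLex_lt_toLex_exchange (a : ι → ℤ) (hij : j < i) :
    toLex a < toLex (a - Pi.single i 1 + Pi.single j 1) := by
  refine ⟨j, fun t ht ↦ ?_, ?_⟩
  · simp [Pi.single_eq_of_ne, ht.ne, (ht.trans hij).ne]
  · simp [Pi.single_eq_of_ne, hij.ne]

lemma finite_setOf_isIndepVector_ge [Finite ι] (f : Finset ι → ℤ) (u : ι → ℤ) :
    {a | IsIndepVector f a ∧ u ≤ a}.Finite := by
  cases nonempty_fintype ι
  exact (Set.finite_Icc u fun i ↦ f {i}).subset fun a ha ↦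
    ⟨ha.2, fun i ↦ by simpa using ha.1 {i}⟩

lemma IsInternallyActive.exists_isTight [Finite ι] (hf : IsNormalizedSubmodular f)
    (ha : IsIndepVector f a) (hi : IsInternallyActive f a i) :
    ∃ T, IsTight f a T ∧ (∀ j < i, j ∈ T) ∧ i ∉ T := by
  cases nonempty_fintype ι
  choose! T hT using fun j hj ↦ ha.exists_isTight_of_not_exchange (hi j hj)
  refine ⟨({j | j < i} : Finset ι).sup T, .sup hf ha fun j hj ↦ ?_, fun j hj ↦ ?_, fun h ↦ ?_⟩
  · exact (hT j (mem_filter.1 hj).2).1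
  · exact mem_sup.2 ⟨j, by simpa using hj, (hT j hj).2.1⟩
  · obtain ⟨j, hj, hij⟩ := mem_sup.1 h
    exact (hT j (mem_filter.1 hj).2).2.2 hij

variable [Fintype ι]

lemma IsInternallyActive.apply_le (hf : IsNormalizedSubmodular f) (ha : IsBaseVector f a)
    (hb : IsBaseVector f b) (hi : IsInternallyActive f a i) (hab : ∀ t > i, b t ≤ a t) :
    a i ≤ b i := by
  obtain ⟨T, hT, hlt, hiT⟩ := hi.exists_isTight hf ha.1
  have hcompl : ∑ t ∈ Tᶜ, a t ≤ ∑ t ∈ Tᶜ, b t := by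
    have := hb.1 T
    have := hT.trans_ge this
    have : ∑ t, a t = ∑ t, b t := ha.2.trans hb.2.symm
    have := sum_add_sum_compl T a
    have := sum_add_sum_compl T b
    lia
  by_contra! hba
  refine hcompl.not_gt (sum_lt_sum (fun t ht ↦ ?_) ⟨i, mem_compl.2 hiT, hba⟩)
  rcases lt_trichotomy t i with h | rfl | h
  · exact absurd (hlt t h) (mem_compl.1 ht)
  · exact hba.le
  · exact hab t h

lemma IsBaseVector.eq_of_active (hf : IsNormalizedSubmodular f) (ha : IsBaseVector f a)
    (hb : IsBaseVector f b) (hua : u ≤ a) (hub : u ≤ b)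
    (haAct : ∀ i, u i < a i → IsInternallyActive f a i)
    (hbAct : ∀ i, u i < b i → IsInternallyActive f b i) : a = b := by
  funext i
  induction i using WellFoundedGT.induction with
  | ind i ih =>
    refine le_antisymm (le_of_not_gt fun hlt ↦ ?_) (le_of_not_gt fun hlt ↦ ?_)
    · exact hlt.not_ge <|
        (haAct i ((hub i).trans_lt hlt)).apply_le hf ha hb fun t ht ↦ (ih t ht).ge
    · exact hlt.not_ge <|
        (hbAct i ((hua i).trans_lt hlt)).apply_le hf hb ha fun t ht ↦ (ih t ht).le

-- The lexicographically largest independent vector above `u` admits neither an increase nor an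
-- exchange towards a smaller index.
lemma IsIndepVector.exists_base_ge (hf : IsNormalizedSubmodular f) (hu : IsIndepVector f u) :
    ∃ a, IsBaseVector f a ∧ u ≤ a ∧ ∀ i, u i < a i → IsInternallyActive f a i := by
  obtain ⟨a, ⟨ha, hua⟩, hmax⟩ := (finite_setOf_isIndepVector_ge f u).exists_maximalFor toLex _
    ⟨u, hu, le_rfl⟩
  replace hmax : ∀ b, IsIndepVector f b → u ≤ b → ¬ toLex a < toLex b := fun b hb hub hlt ↦
    (hmax ⟨hb, hub⟩ hlt.le).not_gt hlt
  refine ⟨a, ⟨ha, ?_⟩, hua, fun i hi j hj hexch ↦ ?_⟩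
  · have hincr (j : ι) : a < a + Pi.single j 1 := lt_add_of_pos_right a (by simp)
    choose T hT hmem using fun j ↦ ha.exists_isTight_of_not_add_single fun h ↦
      hmax _ h (hua.trans (hincr j).le) (Pi.toLex_strictMono (hincr j))
    have huniv : (univ : Finset ι) = univ.sup T := by
      ext j
      simpa using ⟨j, hmem j⟩
    rw [huniv]
    exact .sup hf ha fun j _ ↦ hT j
  · refine hmax _ hexch (fun t ↦ ?_) (toLex_lt_toLex_exchange a hj)
    have := hua t
    simp only [Pi.add_apply, Pi.sub_apply, Pi.single_apply]
    grind

end Submodular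

section Circuits

variable {ι : Type*} [Fintype ι] {g : Finset ι → ℤ} {C C' Z : Finset ι}

open scoped Classical in
/-- The minimal sets on which `g` is positive. When `g` is the excess of a polymatroid these play
the role of the circuits of a matroid. -/
noncomputable def circuits (g : Finset ι → ℤ) : Finset (Finset ι) :=
  {C | Minimal (fun C ↦ 0 < g C) C}

lemma mem_circuits : C ∈ circuits g ↔ Minimal (fun C ↦ 0 < g C) C := by
  simp [circuits]

lemma coeff_one_sub_sum_circuits_zero (hg : g ∅ ≤ 0) :
    (1 - ∑ C ∈ circuits g, X ^ #C : ℤ[X]).coeff 0 = 1 := by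
  have hempty : ∅ ∉ circuits g := fun h ↦ (mem_circuits.1 h).prop.not_ge hg
  have : ∀ C ∈ circuits g, (X ^ #C : ℤ[X]).coeff 0 = 0 := fun C hC ↦ by
    have : C ≠ ∅ := ne_of_mem_of_not_mem hC hempty
    simp [coeff_X_pow, this, eq_comm]
  rw [coeff_sub, finsetSum_coeff, sum_eq_zero this, coeff_one_zero, sub_zero]

lemma coeff_one_sub_sum_circuits_nonpos {i : ℕ} (hi : 0 < i) :
    (1 - ∑ C ∈ circuits g, X ^ #C : ℤ[X]).coeff i ≤ 0 := by
  rw [coeff_sub, coeff_one, if_neg hi.ne', zero_sub, neg_nonpos, finsetSum_coeff]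
  refine sum_nonneg fun C _ ↦ ?_
  rw [coeff_X_pow]
  positivity

variable [DecidableEq ι]

lemma eq_of_mem_circuits_of_subset (hsup : ∀ I J, g I + g J ≤ g (I ∪ J) + g (I ∩ J))
    (hmono : Monotone g) (hC : C ∈ circuits g) (hC' : C' ∈ circuits g) (hCZ : C ⊆ Z)
    (hC'Z : C' ⊆ Z) (hZ : g Z ≤ 1) : C = C' := by
  rw [mem_circuits] at hC hC'
  have hinter : 0 < g (C ∩ C') := by
    have := hC.prop
    have := hC'.prop
    have := hsup C C'
    have := hmono (union_subset hCZ hC'Z)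
    lia
  exact (hC.eq_of_ge hinter inter_subset_left).trans
    (hC'.eq_of_ge hinter inter_subset_right).symm

lemma ite_nonpos_eq_one_sub_card_circuits {R : Type*} [Ring R]
    (hsup : ∀ I J, g I + g J ≤ g (I ∪ J) + g (I ∩ J)) (hmono : Monotone g) (hZ : g Z ≤ 1) :
    (if g Z ≤ 0 then 1 else 0 : R) = 1 - #{C ∈ circuits g | C ⊆ Z} := by
  split_ifs with h
  · have : {C ∈ circuits g | C ⊆ Z} = ∅ := filter_eq_empty_iff.2 fun C hC hCZ ↦
      ((mem_circuits.1 hC).prop.trans_le (hmono hCZ)).not_ge h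
    simp [this]
  · obtain ⟨C, hCZ, hC⟩ := exists_minimal_le_of_wellFoundedLT (fun C ↦ 0 < g C) Z (not_le.1 h)
    rw [← mem_circuits] at hC
    have : {C ∈ circuits g | C ⊆ Z} = {C} := by
      ext C'
      simp only [mem_filter, mem_singleton]
      refine ⟨fun hC' ↦ ?_, by rintro rfl; exact ⟨hC, hCZ⟩⟩
      exact eq_of_mem_circuits_of_subset hsup hmono hC'.1 hC hC'.2 hCZ hZ
    simp [this]

end Circuits

section Excess

variable {ι : Type*} {f : Finset ι → ℤ}

/-- The excess of `I`, by which the ranks of its elements exceed the rank of `I`; the number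
`r'_k` is the least size of a set of excess at least `k`. -/
def excess (f : Finset ι → ℤ) (I : Finset ι) : ℤ := ∑ i ∈ I, f {i} - f I

lemma isIndepVector_singleton_sub_iff {v : ι → ℕ} :
    IsIndepVector f (fun i ↦ f {i} - v i) ↔ ∀ I, excess f I ≤ ∑ i ∈ I, (v i : ℤ) :=
  forall_congr' fun I ↦ by
    rw [sum_sub_distrib, excess]
    lia

variable [LinearOrder ι]

lemma IsNormalizedSubmodular.excess_empty (hf : IsNormalizedSubmodular f) : excess f ∅ = 0 := by
  simp [excess, hf.map_empty]

lemma IsNormalizedSubmodular.excess_add_le (hf : IsNormalizedSubmodular f) (I J : Finset ι) :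
    excess f I + excess f J ≤ excess f (I ∪ J) + excess f (I ∩ J) := by
  have := hf.union_add_inter_le I J
  have := sum_union_inter (s₁ := I) (s₂ := J) (f := fun i ↦ f {i})
  unfold excess
  lia

lemma IsNormalizedSubmodular.monotone_excess (hf : IsNormalizedSubmodular f) :
    Monotone (excess f) := by
  refine monotone_iff_forall_le_insert.2 fun I i hi ↦ ?_
  have := hf.excess_add_le {i} I
  rw [← insert_eq, singleton_inter_of_notMem hi, hf.excess_empty] at this
  simpa [excess] using this

variable [Fintype ι] {D : ℕ}

lemma IsNormalizedSubmodular.isIndepVector_singleton_sub_iff_of_excess_le_one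
    (hf : IsNormalizedSubmodular f) (hD : excess f univ ≤ D) {v : ι → ℕ}
    (hv : excess f {i | v i < D} ≤ 1) :
    IsIndepVector f (fun i ↦ f {i} - v i) ↔ excess f {i | v i = 0} ≤ 0 := by
  rw [isIndepVector_singleton_sub_iff]
  refine ⟨fun h ↦ (h _).trans_eq (sum_eq_zero (by simp)), fun h I ↦ ?_⟩
  have hle : ∀ i ∈ I, (v i : ℤ) ≤ ∑ i ∈ I, (v i : ℤ) := fun i ↦
    single_le_sum (f := fun i ↦ (v i : ℤ)) (fun _ _ ↦ Int.natCast_nonneg _)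
  by_cases hlarge : ∃ i ∈ I, D ≤ v i
  · obtain ⟨i, hi, hDi⟩ := hlarge
    exact (hf.monotone_excess (subset_univ I)).trans (hD.trans (by have := hle i hi; lia))
  by_cases hpos : ∃ i ∈ I, 0 < v i
  · obtain ⟨i, hi, hvi⟩ := hpos
    push Not at hlarge
    refine (hf.monotone_excess fun i hi ↦ ?_).trans (hv.trans (by have := hle i hi; lia))
    simpa using hlarge i hi
  · push Not at hpos
    refine (hf.monotone_excess fun i hi ↦ ?_).trans (h.trans (by positivity))
    simpa using hpos i hi

open scoped Classical in
lemma IsNormalizedSubmodular.pow_dvd_sum_indep_sub {R : Type*} [CommRing R]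
    (hf : IsNormalizedSubmodular f) (hD₀ : 0 < D) (hD : excess f univ ≤ D) {r : ℕ}
    (hr : ∀ F : Finset ι, #F < r → excess f F ≤ 1) (y : R) :
    y ^ r ∣ ∑ v ∈ raisedBox 0 univ D with IsIndepVector f (fun i ↦ f {i} - (v i : ℤ)),
      ∏ i, truncGeom y D (v i) - (1 - ∑ C ∈ circuits (excess f), y ^ #C) := by
  have hone : ∑ v ∈ raisedBox 0 univ D, ∏ i : ι, truncGeom y D (v i) = 1 := by
    simpa using sum_raisedBox_filter_eq_zero_on y hD₀ (∅ : Finset ι)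
  have hcircuits : ∑ C ∈ circuits (excess f), y ^ #C = ∑ v ∈ raisedBox 0 univ D,
      #{C ∈ circuits (excess f) | ∀ i ∈ C, v i = 0} * ∏ i, truncGeom y D (v i) := by
    simp_rw [← sum_raisedBox_filter_eq_zero_on y hD₀, sum_filter, sum_comm (t := raisedBox _ _ _),
      ← sum_filter, sum_const, nsmul_eq_mul]
  rw [hcircuits, ← hone, ← sum_sub_distrib, sum_filter, ← sum_sub_distrib]
  refine dvd_sum fun v _ ↦ ?_
  by_cases hv : #{i | v i < D} < r
  · have hzero : ({i | v i = 0} : Finset ι) ⊆ ({i | v i < D} : Finset ι) := fun i hi ↦ by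
      simp_all
    have hcount := ite_nonpos_eq_one_sub_card_circuits (R := R) hf.excess_add_le
      hf.monotone_excess <| (hf.monotone_excess hzero).trans (hr _ hv)
    simp only [← hf.isIndepVector_singleton_sub_iff_of_excess_le_one hD (hr _ hv), subset_iff,
      mem_filter, mem_univ, true_and] at hcount
    convert dvd_zero _
    rw [← mul_boole]
    linear_combination (∏ i, truncGeom y D (v i)) * hcount
  · have hdvd := (pow_dvd_pow y (not_lt.1 hv)).trans (pow_card_dvd_prod_truncGeom y v)
    refine dvd_sub ?_ (dvd_sub hdvd (hdvd.mul_left _))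
    split_ifs
    exacts [hdvd, dvd_zero _]

end Excess

section BaseExpansion

variable {ι : Type*} {f : Finset ι → ℤ} {a b u : ι → ℤ}

lemma IsIndepVector.mono (ha : IsIndepVector f a) (hua : u ≤ a) : IsIndepVector f u :=
  fun I ↦ (sum_le_sum fun i _ ↦ hua i).trans (ha I)

/-- The slack of the vector `a` with respect to the ranks of the singletons. It is truncated at `0`,
which has no effect when `a` is independent. -/
def slack (f : Finset ι → ℤ) (a : ι → ℤ) (i : ι) : ℕ := (f {i} - a i).toNat

lemma IsIndepVector.coe_slack (ha : IsIndepVector f a) (i : ι) : (slack f a i : ℤ) = f {i} - a i :=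
  Int.toNat_of_nonneg (sub_nonneg.2 (by simpa using ha {i}))

variable [Fintype ι] {D : ℕ}

lemma IsBaseVector.sum_slack (ha : IsBaseVector f a) :
    ∑ i, slack f a i = (excess f univ).toNat := by
  have : ((∑ i, slack f a i : ℕ) : ℤ) = excess f univ := by
    have := ha.2
    push_cast
    rw [sum_congr rfl fun i _ ↦ ha.1.coe_slack i, sum_sub_distrib, excess, ← this]
  lia

lemma IsBaseVector.slack_lt (ha : IsBaseVector f a) (hD : (excess f univ).toNat < D) (i : ι) :
    slack f a i < D :=
  (single_le_sum (fun _ _ ↦ Nat.zero_le _) (mem_univ i)).trans_lt (ha.sum_slack.trans_lt hD)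

variable [LinearOrder ι]

open scoped Classical in
/-- The set of internally active indices of `a`. -/
noncomputable def internallyActive (f : Finset ι → ℤ) (a : ι → ℤ) : Finset ι :=
  {i | IsInternallyActive f a i}

lemma IsBaseVector.mem_raisedBox_slack_iff (ha : IsBaseVector f a)
    (hD : (excess f univ).toNat < D) {v : ι → ℕ} :
    v ∈ raisedBox (slack f a) (internallyActive f a) D ↔
      (∀ i, v i ≤ D) ∧ (fun i ↦ f {i} - (v i : ℤ)) ≤ a ∧
        ∀ i, f {i} - v i < a i → IsInternallyActive f a i := by
  have hslack := ha.1.coe_slack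
  rw [mem_raisedBox_iff fun i ↦ (ha.slack_lt hD i).le]
  simp only [internallyActive, mem_filter, mem_univ, true_and, Pi.le_def]
  refine and_congr_right' (and_congr ?_ ?_) <;> refine forall_congr' fun i ↦ ?_
  · have := hslack i
    lia
  · have := hslack i
    exact imp_congr_left (by lia)

lemma IsNormalizedSubmodular.disjoint_raisedBox_slack (hf : IsNormalizedSubmodular f)
    (hD : (excess f univ).toNat < D) (ha : IsBaseVector f a) (hb : IsBaseVector f b) (hab : a ≠ b) :
    Disjoint (raisedBox (slack f a) (internallyActive f a) D)
      (raisedBox (slack f b) (internallyActive f b) D) := by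
  refine disjoint_left.2 fun v hva hvb ↦ hab ?_
  obtain ⟨-, hua, haAct⟩ := (ha.mem_raisedBox_slack_iff hD).1 hva
  obtain ⟨-, hub, hbAct⟩ := (hb.mem_raisedBox_slack_iff hD).1 hvb
  exact ha.eq_of_active hf hb hua hub haAct hbAct

open scoped Classical in
lemma IsNormalizedSubmodular.filter_indep_eq_biUnion (hf : IsNormalizedSubmodular f)
    (hD : (excess f univ).toNat < D) {B : Finset (ι → ℤ)} (hB : ∀ a, a ∈ B ↔ IsBaseVector f a) :
    {v ∈ raisedBox (0 : ι → ℕ) univ D | IsIndepVector f fun i ↦ f {i} - (v i : ℤ)} =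
      B.biUnion fun a ↦ raisedBox (slack f a) (internallyActive f a) D := by
  have hbox (v : ι → ℕ) : v ∈ raisedBox 0 univ D ↔ ∀ i, v i ≤ D := by simp [raisedBox]
  ext v
  simp only [mem_filter, mem_biUnion, hbox]
  constructor
  · rintro ⟨hvD, hv⟩
    obtain ⟨a, ha, hva⟩ := hv.exists_base_ge hf
    exact ⟨a, (hB a).2 ha, (ha.mem_raisedBox_slack_iff hD).2 ⟨hvD, hva⟩⟩
  · rintro ⟨a, haB, hv⟩
    have ha := (hB a).1 haB
    obtain ⟨hvD, hva, -⟩ := (ha.mem_raisedBox_slack_iff hD).1 hv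
    exact ⟨hvD, ha.1.mono hva⟩

open scoped Classical in
lemma IsNormalizedSubmodular.sum_indep_prod_truncGeom {R : Type*} [CommRing R]
    (hf : IsNormalizedSubmodular f) (hD : (excess f univ).toNat < D) {B : Finset (ι → ℤ)}
    (hB : ∀ a, a ∈ B ↔ IsBaseVector f a) (y : R) :
    ∑ v ∈ raisedBox 0 univ D with IsIndepVector f (fun i ↦ f {i} - (v i : ℤ)),
      ∏ i, truncGeom y D (v i) =
      (1 - y) ^ (excess f univ).toNat * ∑ a ∈ B, y ^ #(internallyActive f a)ᶜ := by
  rw [hf.filter_indep_eq_biUnion hD hB, sum_biUnion fun a ha b hb ↦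
    hf.disjoint_raisedBox_slack hD ((hB a).1 ha) ((hB b).1 hb), mul_sum]
  refine sum_congr rfl fun a haB ↦ ?_
  have ha := (hB a).1 haB
  rw [sum_raisedBox_prod_truncGeom y _ (ha.slack_lt hD), ha.sum_slack]

end BaseExpansion

section Polymatroid

variable {n : ℕ} {f : Finset (Fin n) → ℕ}

lemma IsPolymatroidRank.isNormalizedSubmodular (hf : IsPolymatroidRank n f) :
    IsNormalizedSubmodular fun I ↦ (f I : ℤ) where
  map_empty := by exact_mod_cast hf.1
  union_add_inter_le I J := by exact_mod_cast hf.2.2 I J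

lemma IsPolymatroidRank.apply_nonneg_of_isBaseVector (hf : IsPolymatroidRank n f) {a : Fin n → ℤ}
    (ha : IsBaseVector (fun I ↦ (f I : ℤ)) a) (i : Fin n) : 0 ≤ a i := by
  have herase := ha.1 (univ.erase i)
  have hmono : f (univ.erase i) ≤ f univ := hf.2.1 _ _ (subset_univ _)
  have htotal : ∑ t, a t = f univ := ha.2
  have := add_sum_erase univ a (mem_univ i)
  lia

lemma IsPolymatroidRank.mem_polyBases_iff (hf : IsPolymatroidRank n f) {a : Fin n → ℤ} :
    a ∈ polyBases n f ↔ IsBaseVector (fun I ↦ (f I : ℤ)) a := by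
  rw [polyBases, mem_filter]
  refine ⟨fun h ↦ h.2.2, fun h ↦ ?_⟩
  have hnonneg := hf.apply_nonneg_of_isBaseVector h
  refine ⟨mem_image.2 ⟨fun i ↦ ⟨(a i).toNat, ?_⟩, mem_univ _, ?_⟩, hnonneg, h⟩
  · have : a i ≤ f univ := (single_le_sum (fun t _ ↦ hnonneg t) (mem_univ i)).trans_eq h.2
    lia
  · exact funext fun i ↦ Int.toNat_of_nonneg (hnonneg i)

lemma IsPolymatroidRank.intAct_eq_internallyActive (hf : IsPolymatroidRank n f) {a : Fin n → ℤ}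
    (ha : IsBaseVector (fun I ↦ (f I : ℤ)) a) :
    intAct n f a = internallyActive (fun I ↦ (f I : ℤ)) a := by
  ext i
  simp only [intAct, internallyActive, mem_filter, mem_univ, true_and]
  refine forall₂_congr fun j _ ↦ not_congr ?_
  have hexch : (fun t ↦ a t - (if t = i then 1 else 0) + if t = j then 1 else 0) =
      a - Pi.single i 1 + Pi.single j 1 := by
    ext t
    simp [Pi.single_apply]
  rw [hexch, hf.mem_polyBases_iff]
  refine and_iff_left ?_
  rw [IsTight, sum_exchange]
  simpa [IsTight] using ha.2

lemma IsPolymatroidRank.interiorPoly_eq (hf : IsPolymatroidRank n f) :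
    interiorPoly n f =
      ∑ a ∈ polyBases n f, X ^ #(internallyActive (fun I ↦ (f I : ℤ)) a)ᶜ :=
  sum_congr rfl fun a ha ↦ by
    rw [hf.intAct_eq_internallyActive (hf.mem_polyBases_iff.1 ha), card_compl, Fintype.card_fin]

lemma excess_lt_of_card_lt_rk' {k : ℕ} {F : Finset (Fin n)} (hF : #F < rk' n f k) :
    excess (fun I ↦ (f I : ℤ)) F < k :=
  not_le.1 fun h ↦ Nat.notMem_of_lt_sInf hF ⟨F, h, rfl⟩

lemma IsPolymatroidRank.le_excess_univ_of_rk'_pos (hf : IsPolymatroidRank n f) {k : ℕ}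
    (hk : 0 < rk' n f k) : k ≤ excess (fun I ↦ (f I : ℤ)) univ := by
  obtain ⟨_, F, hF, -⟩ := Nat.nonempty_of_pos_sInf hk
  exact hF.trans (hf.isNormalizedSubmodular.monotone_excess (subset_univ F))

lemma IsPolymatroidRank.X_pow_rk'_dvd (hf : IsPolymatroidRank n f) :
    (X : ℤ[X]) ^ rk' n f 2 ∣
      (1 - X) ^ (excess (fun I ↦ (f I : ℤ)) univ).toNat * interiorPoly n f -
        (1 - ∑ C ∈ circuits (excess fun I ↦ (f I : ℤ)), X ^ #C) := by
  have hsub := hf.isNormalizedSubmodular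
  rw [hf.interiorPoly_eq, ← hsub.sum_indep_prod_truncGeom (Nat.lt_succ_self _)
    fun a ↦ hf.mem_polyBases_iff]
  refine hsub.pow_dvd_sum_indep_sub (Nat.succ_pos _) (by lia) (fun F hF ↦ ?_) X
  have := excess_lt_of_card_lt_rk' hF
  lia

end Polymatroid

/-- The sequence `[x^0]I_P(x), …, [x^{r'_2(P)-1}]I_P(x)` is unimodal. -/
theorem stmt17 (n : ℕ) (f : Finset (Fin n) → ℕ) (hf : IsPolymatroidRank n f) :
    ∃ k : ℕ,
      (∀ i : ℕ, i < k → i + 1 ≤ rk' n f 2 - 1 →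
        (interiorPoly n f).coeff i ≤ (interiorPoly n f).coeff (i + 1)) ∧
      (∀ i : ℕ, k < i → i + 1 ≤ rk' n f 2 - 1 →
        (interiorPoly n f).coeff (i + 1) ≤ (interiorPoly n f).coeff i) := by
  have hsub := hf.isNormalizedSubmodular
  rcases (rk' n f 2).eq_zero_or_pos with hr | hr
  · exact ⟨0, fun i hi ↦ absurd hi i.not_lt_zero, fun i _ hir ↦ by lia⟩
  obtain ⟨d, hd⟩ : ∃ d, (excess (fun I ↦ (f I : ℤ)) univ).toNat = d + 1 :=
    Nat.exists_eq_add_one.2 (by have := hf.le_excess_univ_of_rk'_pos hr; lia)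
  have hdvd := hf.X_pow_rk'_dvd
  rw [hd] at hdvd
  obtain ⟨k, hinc, hdec⟩ := exists_unimodal_of_X_pow_dvd hr d hdvd
    (by rw [coeff_one_sub_sum_circuits_zero hsub.excess_empty.le]; exact zero_le_one)
    fun i ↦ coeff_one_sub_sum_circuits_nonpos
  exact ⟨k, fun i hik hir ↦ hinc i hik (by lia), fun i hki hir ↦ hdec i hki (by lia)⟩
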